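/- Assume the Gutiérrez conditions and let χ : ℝ² → {0,1} be measurable. Let M be a 2×2 real matrix with det(M) = 0 and let v : ℝ² → ℝ² be Lipschitz and ℤ²-periodic. Then the periodic cell energy is nonnegative: ∫_{[0,1)²} [χ(x)·Q₁(M + Dv(x)) + (1−χ(x))·Q₂(M + Dv(x))] dx ≥ 0. -/

import Mathlib

open MeasureTheory

/-- The isotropic elasticity quadratic form on 2×2 real matrices with Lamé
parameters `lam`, `mu`: `Q_{λ,μ}(A) = (λ+2μ)(A₁₁²+A₂₂²) + 2λA₁₁A₂₂ + μ(A₁₂+A₂₁)²`. -/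
def isoQ (lam mu : ℝ) (A : Matrix (Fin 2) (Fin 2) ℝ) : ℝ :=
  (lam + 2 * mu) * ((A 0 0) ^ 2 + (A 1 1) ^ 2) + 2 * lam * (A 0 0 * A 1 1)
    + mu * (A 0 1 + A 1 0) ^ 2

/-- The determinant of a 2×2 real matrix. -/
def det2 (A : Matrix (Fin 2) (Fin 2) ℝ) : ℝ := A 0 0 * A 1 1 - A 0 1 * A 1 0

/-- The Jacobian matrix of a map `v : ℝ² → ℝ²` at `x`: `(jac v x) i j = ∂ⱼ vⁱ (x)`.
(For a Lipschitz map this coincides a.e. with the total derivative, by Rademacher.) -/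
noncomputable def jac (v : (Fin 2 → ℝ) → (Fin 2 → ℝ)) (x : Fin 2 → ℝ) :
    Matrix (Fin 2) (Fin 2) ℝ :=
  Matrix.of fun i j => fderiv ℝ v x (Pi.single j 1) i

/-- `ℤ²`-periodicity of a map `ℝ² → ℝ²`. -/
def ZsqPeriodic (v : (Fin 2 → ℝ) → (Fin 2 → ℝ)) : Prop :=
  ∀ (x : Fin 2 → ℝ) (z : Fin 2 → ℤ), v (x + fun i => (z i : ℝ)) = v x

/-- The unit cell `[0,1)²`. -/
def unitCell : Set (Fin 2 → ℝ) := Set.univ.pi fun _ => Set.Ico (0 : ℝ) 1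

/-!
If `0 ≤ c ≤ μ` and `0 ≤ λ + μ + c`, then `Q_{λ,μ} + 4c det` is a sum of squares, hence nonnegative.
Under the Gutiérrez conditions both phases admit the same constant `c = μ₁`, so the energy density
is at least `-4μ₁ det (M + Dv)`, whatever the mixture `χ`. The determinant is a null Lagrangian: its
mean over the cell is `det M`. For merely Lipschitz `v` this rests on
`∫ ∂ᵤf ∂ᵥg = ∫ ∂ᵥf ∂ᵤg` for periodic `f` and `g`, which is the limit of the same identity for
difference quotients: summation by parts turns the latter into the commutation of difference
operators.
-/

open Bornology Filter Function Topology
open scoped ENNReal NNReal fwdDiff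

/-! ### Difference operators on periodic functions -/

theorem fwdDiff_comm {M G : Type*} [AddCommMonoid M] [AddCommGroup G] (a b : M) (f : M → G) :
    Δ_[a] (Δ_[b] f) = Δ_[b] (Δ_[a] f) := by
  funext x
  simp only [fwdDiff, add_right_comm x a b]
  abel

theorem periodic_fwdDiff {M G : Type*} [AddCommMonoid M] [AddCommGroup G] {f : M → G} {l : M}
    (hf : Periodic f l) (a : M) : Periodic (Δ_[a] f) l :=
  (hf.add_const a).sub hf

theorem setIntegral_comp_add_right_of_periodic {E F : Type*} [AddCommGroup E] [MeasurableSpace E]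
    [MeasurableAdd E] [NormedAddCommGroup F] [NormedSpace ℝ F] {μ : Measure E}
    [μ.IsAddLeftInvariant] {L : AddSubgroup E} [Countable L] {s : Set E}
    (hs : IsAddFundamentalDomain L s μ) {f : E → F} (hf : ∀ l ∈ L, Periodic f l) (a : E) :
    ∫ x in s, f (x + a) ∂μ = ∫ x in s, f x ∂μ := by
  have hinv : ∀ (l : L) (x : E), f (l +ᵥ x) = f x := fun l x => by
    rw [AddSubgroup.vadd_def, vadd_eq_add, add_comm, hf l l.2 x]
  calc
    ∫ x in s, f (x + a) ∂μ = ∫ x in (a + ·) '' s, f x ∂μ := by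
      simp only [add_comm _ a]
      exact ((measurePreserving_add_left μ a).setIntegral_image_emb
        (measurableEmbedding_addLeft a) f s).symm
    _ = ∫ x in s, f x ∂μ := (hs.vadd_of_comm a).setIntegral_eq hs hinv

theorem integrableOn_of_continuous_of_isBounded {X F : Type*} [MetricSpace X] [ProperSpace X]
    [MeasurableSpace X] [OpensMeasurableSpace X] [NormedAddCommGroup F] {μ : Measure X}
    [IsFiniteMeasureOnCompacts μ] {f : X → F} {s : Set X} (hf : Continuous f) (hs : IsBounded s) :
    IntegrableOn f s μ :=
  (hf.continuousOn.integrableOn_compact hs.isCompact_closure).mono_set subset_closure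

section SummationByParts

variable {E : Type*} [NormedAddCommGroup E] [ProperSpace E] [MeasurableSpace E] [BorelSpace E]
  {μ : Measure E} [IsFiniteMeasureOnCompacts μ] [μ.IsAddLeftInvariant] {L : AddSubgroup E}
  [Countable L] {s : Set E} {f g : E → ℝ}

theorem setIntegral_fwdDiff_eq_zero {F : Type*} [NormedAddCommGroup F] [NormedSpace ℝ F]
    {f : E → F} (hs : IsAddFundamentalDomain L s μ) (hsb : IsBounded s) (hf : Continuous f)
    (hfL : ∀ l ∈ L, Periodic f l) (a : E) : ∫ x in s, Δ_[a] f x ∂μ = 0 := by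
  simp only [fwdDiff]
  rw [integral_sub (integrableOn_of_continuous_of_isBounded (by fun_prop) hsb)
      (integrableOn_of_continuous_of_isBounded hf hsb),
    setIntegral_comp_add_right_of_periodic hs hfL, sub_self]

theorem setIntegral_fwdDiff_mul (hs : IsAddFundamentalDomain L s μ) (hsb : IsBounded s)
    (hf : Continuous f) (hg : Continuous g) (hfL : ∀ l ∈ L, Periodic f l)
    (hgL : ∀ l ∈ L, Periodic g l) (a : E) :
    ∫ x in s, Δ_[a] f x * g x ∂μ = ∫ x in s, f x * Δ_[-a] g x ∂μ := by
  have hint : ∀ {h : E → ℝ}, Continuous h → IntegrableOn h s μ := fun hh =>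
    integrableOn_of_continuous_of_isBounded hh hsb
  have hshift : ∫ x in s, f (x + a) * g x ∂μ = ∫ x in s, f x * g (x + -a) ∂μ := by
    simpa only [Pi.mul_apply, add_neg_cancel_right] using
      setIntegral_comp_add_right_of_periodic hs
        (fun l hl => (hfL l hl).mul ((hgL l hl).add_const (-a))) a
  simp only [fwdDiff, sub_mul, mul_sub]
  rw [integral_sub (hint (by fun_prop)) (hint (by fun_prop)),
    integral_sub (hint (by fun_prop)) (hint (by fun_prop)), hshift]

theorem setIntegral_fwdDiff_mul_fwdDiff_neg_comm (hs : IsAddFundamentalDomain L s μ)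
    (hsb : IsBounded s) (hf : Continuous f) (hg : Continuous g) (hfL : ∀ l ∈ L, Periodic f l)
    (hgL : ∀ l ∈ L, Periodic g l) (a b : E) :
    ∫ x in s, Δ_[a] f x * Δ_[-b] g x ∂μ = ∫ x in s, Δ_[b] f x * Δ_[-a] g x ∂μ := by
  have hparts : ∀ c d,
      ∫ x in s, Δ_[c] f x * Δ_[-d] g x ∂μ = ∫ x in s, Δ_[d] (Δ_[c] f) x * g x ∂μ := fun c d => by
    have hcont : Continuous (Δ_[c] f) := by
      unfold fwdDiff
      fun_prop
    rw [setIntegral_fwdDiff_mul hs hsb hcont hg (fun l hl => periodic_fwdDiff (hfL l hl) c) hgL]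
  rw [hparts, hparts, fwdDiff_comm]

end SummationByParts

/-! ### Directional derivatives of periodic Lipschitz functions -/

theorem norm_inv_smul_fwdDiff_le {E F : Type*} [SeminormedAddCommGroup E] [NormedSpace ℝ E]
    [SeminormedAddCommGroup F] [NormedSpace ℝ F] {f : E → F} {C : ℝ≥0} (hf : LipschitzWith C f)
    (t : ℝ) (a x : E) : ‖t⁻¹ • Δ_[t • a] f x‖ ≤ C * ‖a‖ := by
  rcases eq_or_ne t 0 with rfl | ht
  · simp only [inv_zero, zero_smul, norm_zero]
    positivity
  · have hdiff : ‖f (x + t • a) - f x‖ ≤ C * (‖t‖ * ‖a‖) := by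
      simpa only [add_sub_cancel_left, norm_smul] using hf.norm_sub_le (x + t • a) x
    rw [fwdDiff, norm_smul, norm_inv, inv_mul_le_iff₀ (norm_pos_iff.2 ht)]
    linarith

section Lipschitz

variable {E : Type*} [NormedAddCommGroup E] [NormedSpace ℝ E] [FiniteDimensional ℝ E]
  [MeasurableSpace E] [BorelSpace E] {μ : Measure E} [μ.IsAddHaarMeasure] {s : Set E}
  {f g : E → ℝ} {C D : ℝ≥0}

theorem tendsto_setIntegral_inv_smul_fwdDiff (hsμ : μ s ≠ ∞) (hf : LipschitzWith C f) (a : E) :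
    Tendsto (fun t : ℝ => ∫ x in s, t⁻¹ • Δ_[t • a] f x ∂μ) (𝓝[>] 0)
      (𝓝 (∫ x in s, lineDeriv ℝ f x a ∂μ)) := by
  refine tendsto_integral_filter_of_dominated_convergence (fun _ => C * ‖a‖)
    (.of_forall fun t => ?_)
    (.of_forall fun t => ae_of_all _ (norm_inv_smul_fwdDiff_le hf t a))
    (integrableOn_const hsμ) ?_
  · have := hf.continuous
    unfold fwdDiff
    fun_prop
  · filter_upwards [ae_restrict_of_ae (hf.ae_lineDifferentiableAt a)] with x hx
    exact hx.hasLineDerivAt.tendsto_slope_zero_right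

theorem tendsto_setIntegral_inv_smul_fwdDiff_mul (hsμ : μ s ≠ ∞) (hf : LipschitzWith C f)
    (hg : LipschitzWith D g) (a b : E) :
    Tendsto (fun t : ℝ => ∫ x in s, t⁻¹ • Δ_[t • a] f x * t⁻¹ • Δ_[t • b] g x ∂μ) (𝓝[>] 0)
      (𝓝 (∫ x in s, lineDeriv ℝ f x a * lineDeriv ℝ g x b ∂μ)) := by
  refine tendsto_integral_filter_of_dominated_convergence (fun _ => C * ‖a‖ * (D * ‖b‖))
    (.of_forall fun t => ?_) (.of_forall fun t => ae_of_all _ fun x => ?_)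
    (integrableOn_const hsμ) ?_
  · have := hf.continuous
    have := hg.continuous
    unfold fwdDiff
    fun_prop
  · exact norm_mul_le_of_le (norm_inv_smul_fwdDiff_le hf t a x) (norm_inv_smul_fwdDiff_le hg t b x)
  · filter_upwards [ae_restrict_of_ae (hf.ae_lineDifferentiableAt a),
      ae_restrict_of_ae (hg.ae_lineDifferentiableAt b)] with x hfx hgx
    exact hfx.hasLineDerivAt.tendsto_slope_zero_right.mul
      hgx.hasLineDerivAt.tendsto_slope_zero_right

variable {L : AddSubgroup E} [Countable L]

theorem setIntegral_lineDeriv_eq_zero (hs : IsAddFundamentalDomain L s μ) (hsb : IsBounded s)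
    (hf : LipschitzWith C f) (hfL : ∀ l ∈ L, Periodic f l) (a : E) :
    ∫ x in s, lineDeriv ℝ f x a ∂μ = 0 := by
  have hlim := tendsto_setIntegral_inv_smul_fwdDiff (μ := μ) hsb.measure_lt_top.ne hf a
  simp only [integral_smul, setIntegral_fwdDiff_eq_zero hs hsb hf.continuous hfL, smul_zero] at hlim
  exact tendsto_nhds_unique hlim tendsto_const_nhds

theorem setIntegral_lineDeriv_mul_lineDeriv_comm (hs : IsAddFundamentalDomain L s μ)
    (hsb : IsBounded s) (hf : LipschitzWith C f) (hg : LipschitzWith D g)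
    (hfL : ∀ l ∈ L, Periodic f l) (hgL : ∀ l ∈ L, Periodic g l) (a b : E) :
    ∫ x in s, lineDeriv ℝ f x a * lineDeriv ℝ g x b ∂μ =
      ∫ x in s, lineDeriv ℝ f x b * lineDeriv ℝ g x a ∂μ := by
  have hlim : ∀ c d, Tendsto
      (fun t : ℝ => ∫ x in s, t⁻¹ • Δ_[t • c] f x * t⁻¹ • Δ_[-(t • d)] g x ∂μ) (𝓝[>] 0)
      (𝓝 (-∫ x in s, lineDeriv ℝ f x c * lineDeriv ℝ g x d ∂μ)) := fun c d => by
    simpa only [smul_neg, lineDeriv_neg, mul_neg, integral_neg] using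
      tendsto_setIntegral_inv_smul_fwdDiff_mul (μ := μ) hsb.measure_lt_top.ne hf hg c (-d)
  refine neg_injective (tendsto_nhds_unique (hlim a b) ((hlim b a).congr fun t => ?_))
  simp only [smul_mul_smul_comm, integral_smul]
  rw [setIntegral_fwdDiff_mul_fwdDiff_neg_comm hs hsb hf.continuous hg.continuous hfL hgL]

end Lipschitz

/-! ### The unit cell -/

/-- The period lattice `ℤ²` as an additive subgroup of `ℝ²`, presented as the `ℤ`-span of the
standard basis so that the theory of `ZSpan` applies. -/
def integerLattice : AddSubgroup (Fin 2 → ℝ) :=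
  (Submodule.span ℤ (Set.range (Pi.basisFun ℝ (Fin 2)))).toAddSubgroup

instance countable_integerLattice : Countable integerLattice :=
  inferInstanceAs (Countable (Submodule.span ℤ (Set.range (Pi.basisFun ℝ (Fin 2)))))

theorem exists_intCast_eq_of_mem_integerLattice {l : Fin 2 → ℝ} (hl : l ∈ integerLattice) :
    ∃ z : Fin 2 → ℤ, (fun i => (z i : ℝ)) = l := by
  rw [integerLattice, Submodule.mem_toAddSubgroup, Module.Basis.mem_span_iff_repr_mem] at hl
  choose z hz using hl
  exact ⟨z, funext hz⟩

theorem isAddFundamentalDomain_unitCell : IsAddFundamentalDomain integerLattice unitCell := by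
  rw [unitCell, ← ZSpan.fundamentalDomain_pi_basisFun]
  exact ZSpan.isAddFundamentalDomain' _ _

theorem isBounded_unitCell : IsBounded unitCell :=
  IsBounded.pi fun _ => Metric.isBounded_Ico 0 1

instance isProbabilityMeasure_restrict_unitCell :
    IsProbabilityMeasure (volume.restrict unitCell) :=
  ⟨by simp [unitCell, volume_pi_pi]⟩

theorem ZsqPeriodic.periodic_apply {v : (Fin 2 → ℝ) → (Fin 2 → ℝ)} (hv : ZsqPeriodic v)
    (i : Fin 2) : ∀ l ∈ integerLattice, Periodic (fun x => v x i) l := by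
  intro l hl x
  obtain ⟨z, rfl⟩ := exists_intCast_eq_of_mem_integerLattice hl
  simp only [hv x z]

/-! ### The determinant as a null Lagrangian -/

section Jacobian

variable {v : (Fin 2 → ℝ) → (Fin 2 → ℝ)} {K : ℝ≥0}

theorem lipschitzWith_apply (hv : LipschitzWith K v) (i : Fin 2) :
    LipschitzWith K fun x => v x i := fun x y =>
  (edist_le_pi_edist (v x) (v y) i).trans (hv x y)

theorem jac_ae_eq_lineDeriv (hv : LipschitzWith K v) (i j : Fin 2) :
    (fun x => jac v x i j) =ᵐ[volume] fun x => lineDeriv ℝ (fun y => v y i) x (Pi.single j 1) := by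
  filter_upwards [hv.ae_differentiableAt] with x hx
  exact (hasDerivAt_pi.1 (hx.hasFDerivAt.hasLineDerivAt (Pi.single j 1)) i).deriv.symm

theorem memLp_top_jac (hv : LipschitzWith K v) (i j : Fin 2) :
    MemLp (fun x => jac v x i j) ∞ :=
  (memLp_congr_ae (jac_ae_eq_lineDeriv hv i j)).2 ((lipschitzWith_apply hv i).memLp_lineDeriv _)

theorem setIntegral_jac_eq_zero (hv : LipschitzWith K v) (hper : ZsqPeriodic v) (i j : Fin 2) :
    ∫ x in unitCell, jac v x i j = 0 := by
  rw [integral_congr_ae (ae_restrict_of_ae (jac_ae_eq_lineDeriv hv i j))]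
  exact setIntegral_lineDeriv_eq_zero isAddFundamentalDomain_unitCell isBounded_unitCell
    (lipschitzWith_apply hv i) (hper.periodic_apply i) _

theorem setIntegral_jac_mul_jac_comm (hv : LipschitzWith K v) (hper : ZsqPeriodic v)
    (i j k l : Fin 2) :
    ∫ x in unitCell, jac v x i k * jac v x j l = ∫ x in unitCell, jac v x i l * jac v x j k := by
  have hline : ∀ k l, ∫ x in unitCell, jac v x i k * jac v x j l = ∫ x in unitCell,
      lineDeriv ℝ (fun y => v y i) x (Pi.single k 1) *
        lineDeriv ℝ (fun y => v y j) x (Pi.single l 1) := fun k l =>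
    integral_congr_ae (ae_restrict_of_ae
      ((jac_ae_eq_lineDeriv hv i k).mul (jac_ae_eq_lineDeriv hv j l)))
  rw [hline, hline]
  exact setIntegral_lineDeriv_mul_lineDeriv_comm isAddFundamentalDomain_unitCell
    isBounded_unitCell (lipschitzWith_apply hv i) (lipschitzWith_apply hv j)
    (hper.periodic_apply i) (hper.periodic_apply j) _ _

theorem setIntegral_det2_jac_eq_zero (hv : LipschitzWith K v) (hper : ZsqPeriodic v) :
    ∫ x in unitCell, det2 (jac v x) = 0 := by
  have hJ := memLp_top_jac hv
  have hint : ∀ i j k l, IntegrableOn (fun x => jac v x i k * jac v x j l) unitCell :=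
    fun i j k l => (((hJ j l).mul' (hJ i k)).restrict _).integrable le_top
  simp only [det2]
  rw [integral_sub (hint ..) (hint ..), setIntegral_jac_mul_jac_comm hv hper, sub_self]

theorem memLp_top_add_jac (hv : LipschitzWith K v) (M : Matrix (Fin 2) (Fin 2) ℝ) (i j : Fin 2) :
    MemLp (fun x => (M + jac v x) i j) ∞ (volume.restrict unitCell) :=
  (memLp_const (M i j)).add ((memLp_top_jac hv i j).restrict _)

end Jacobian

section MatrixValued

variable {α : Type*} [MeasurableSpace α] {μ : Measure α} {A : α → Matrix (Fin 2) (Fin 2) ℝ}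

theorem memLp_top_det2 (hA : ∀ i j, MemLp (fun x => A x i j) ∞ μ) :
    MemLp (fun x => det2 (A x)) ∞ μ :=
  ((hA 1 1).mul' (hA 0 0)).sub ((hA 1 0).mul' (hA 0 1))

theorem memLp_top_isoQ (lam mu : ℝ) (hA : ∀ i j, MemLp (fun x => A x i j) ∞ μ) :
    MemLp (fun x => isoQ lam mu (A x)) ∞ μ := by
  have hmul : ∀ {f g : α → ℝ}, MemLp f ∞ μ → MemLp g ∞ μ → MemLp (fun x => f x * g x) ∞ μ :=
    fun hf hg => hg.mul' hf
  have hshear := (hA 0 1).add (hA 1 0)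
  simp only [isoQ, sq]
  exact ((((hmul (hA 0 0) (hA 0 0)).add (hmul (hA 1 1) (hA 1 1))).const_mul _).add
    ((hmul (hA 0 0) (hA 1 1)).const_mul _)).add ((hmul hshear hshear).const_mul _)

theorem integral_det2_const_add [IsProbabilityMeasure μ]
    (hA : ∀ i j, Integrable (fun x => A x i j) μ) (hA₀ : ∀ i j, ∫ x, A x i j ∂μ = 0)
    (hdet : Integrable (fun x => det2 (A x)) μ) (M : Matrix (Fin 2) (Fin 2) ℝ) :
    ∫ x, det2 (M + A x) ∂μ = det2 M + ∫ x, det2 (A x) ∂μ := by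
  have hexp : ∀ x, det2 (M + A x) = det2 M +
      ((M 0 0 * A x 1 1 + M 1 1 * A x 0 0) - (M 0 1 * A x 1 0 + M 1 0 * A x 0 1)) +
      det2 (A x) := fun x => by
    simp only [det2, Matrix.add_apply]
    ring
  simp only [hexp]
  rw [integral_add, integral_add, integral_sub, integral_add, integral_add]
  · simp only [integral_const, integral_const_mul, hA₀, probReal_univ, one_smul, mul_zero, add_zero,
      sub_zero]
  all_goals fun_prop

end MatrixValued

theorem setIntegral_det2_add_jac {v : (Fin 2 → ℝ) → (Fin 2 → ℝ)} {K : ℝ≥0}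
    (hv : LipschitzWith K v) (hper : ZsqPeriodic v) (M : Matrix (Fin 2) (Fin 2) ℝ) :
    ∫ x in unitCell, det2 (M + jac v x) = det2 M := by
  have hJ : ∀ i j, MemLp (fun x => jac v x i j) ∞ (volume.restrict unitCell) := fun i j =>
    (memLp_top_jac hv i j).restrict _
  rw [integral_det2_const_add (fun i j => (hJ i j).integrable le_top)
      (setIntegral_jac_eq_zero hv hper) ((memLp_top_det2 hJ).integrable le_top),
    setIntegral_det2_jac_eq_zero hv hper, add_zero]

/-! ### The energy density -/

theorem neg_four_mul_det2_le_isoQ {lam mu c : ℝ} (hc : 0 ≤ c) (hcmu : c ≤ mu)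
    (hsum : 0 ≤ lam + mu + c) (A : Matrix (Fin 2) (Fin 2) ℝ) :
    -(4 * c) * det2 A ≤ isoQ lam mu A := by
  have hsq : isoQ lam mu A - -(4 * c) * det2 A =
      (lam + mu + c) * (A 0 0 + A 1 1) ^ 2 +
        (mu - c) * ((A 0 0 - A 1 1) ^ 2 + (A 0 1 + A 1 0) ^ 2) + c * (A 0 1 - A 1 0) ^ 2 := by
    rw [isoQ, det2]
    ring
  have : 0 ≤ mu - c := sub_nonneg.2 hcmu
  rw [← sub_nonneg, hsq]
  positivity

theorem integrableOn_mixture_isoQ {v : (Fin 2 → ℝ) → (Fin 2 → ℝ)} {K : ℝ≥0}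
    (hv : LipschitzWith K v) {χ : (Fin 2 → ℝ) → ℝ} (hχmeas : Measurable χ)
    (hχ : ∀ x, χ x ∈ Set.Icc 0 1) (lam1 mu1 lam2 mu2 : ℝ) (M : Matrix (Fin 2) (Fin 2) ℝ) :
    IntegrableOn (fun x => χ x * isoQ lam1 mu1 (M + jac v x) +
      (1 - χ x) * isoQ lam2 mu2 (M + jac v x)) unitCell := by
  have hχ' : MemLp χ ∞ (volume.restrict unitCell) :=
    memLp_top_of_bound hχmeas.aestronglyMeasurable 1 (ae_of_all _ fun x => by
      rw [Real.norm_of_nonneg (hχ x).1]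
      exact (hχ x).2)
  have hA := memLp_top_add_jac hv M
  exact (((memLp_top_isoQ lam1 mu1 hA).mul' hχ').add
    ((memLp_top_isoQ lam2 mu2 hA).mul' ((memLp_const 1).sub hχ'))).integrable le_top

theorem stmt_10_general {lam1 mu1 lam2 mu2 c : ℝ} (hc : 0 ≤ c) (hc1 : c ≤ mu1) (hc2 : c ≤ mu2)
    (hsum1 : 0 ≤ lam1 + mu1 + c) (hsum2 : 0 ≤ lam2 + mu2 + c)
    {χ : (Fin 2 → ℝ) → ℝ} (hχmeas : Measurable χ) (hχ : ∀ x, χ x ∈ Set.Icc 0 1)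
    (M : Matrix (Fin 2) (Fin 2) ℝ) {v : (Fin 2 → ℝ) → (Fin 2 → ℝ)} {K : ℝ≥0}
    (hlip : LipschitzWith K v) (hper : ZsqPeriodic v) :
    -(4 * c) * det2 M ≤ ∫ x in unitCell,
      (χ x * isoQ lam1 mu1 (M + jac v x) + (1 - χ x) * isoQ lam2 mu2 (M + jac v x)) := by
  rw [← setIntegral_det2_add_jac hlip hper M, ← integral_const_mul]
  refine integral_mono
    (((memLp_top_det2 (memLp_top_add_jac hlip M)).integrable le_top).const_mul _)
    (integrableOn_mixture_isoQ hlip hχmeas hχ lam1 mu1 lam2 mu2 M) fun x => ?_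
  have hq1 := neg_four_mul_det2_le_isoQ hc hc1 hsum1 (M + jac v x)
  have hq2 := neg_four_mul_det2_le_isoQ hc hc2 hsum2 (M + jac v x)
  obtain ⟨hχ₀, hχ₁⟩ := hχ x
  calc
    -(4 * c) * det2 (M + jac v x) =
        χ x * (-(4 * c) * det2 (M + jac v x)) + (1 - χ x) * (-(4 * c) * det2 (M + jac v x)) := by
      ring
    _ ≤ χ x * isoQ lam1 mu1 (M + jac v x) + (1 - χ x) * isoQ lam2 mu2 (M + jac v x) :=
      add_le_add (mul_le_mul_of_nonneg_left hq1 hχ₀)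
        (mul_le_mul_of_nonneg_left hq2 (sub_nonneg.2 hχ₁))

theorem stmt_10 (lam1 mu1 lam2 mu2 : ℝ)
    (h1 : 0 < mu1) (h2 : mu1 = -(lam2 + mu2)) (h3 : mu1 < mu2)
    (h4 : 0 < lam1 + mu1)
    (χ : (Fin 2 → ℝ) → ℝ) (hχmeas : Measurable χ) (hχ : ∀ x, χ x = 0 ∨ χ x = 1)
    (M : Matrix (Fin 2) (Fin 2) ℝ) (hM : det2 M = 0)
    (v : (Fin 2 → ℝ) → (Fin 2 → ℝ)) (K : NNReal)
    (hlip : LipschitzWith K v) (hper : ZsqPeriodic v) :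
    0 ≤ ∫ x in unitCell,
      (χ x * isoQ lam1 mu1 (M + jac v x)
        + (1 - χ x) * isoQ lam2 mu2 (M + jac v x)) := by
  simpa only [hM, mul_zero] using stmt_10_general h1.le le_rfl h3.le (by linarith) (by linarith)
    hχmeas (fun x => by rcases hχ x with h | h <;> simp [h]) M hlip hper
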